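/- arXiv:2302.08462 — 2 statements merged into one kernel-verified Lean document; each statement's English description precedes it below -/
import Mathlib

section
/- Let d ≥ 1, let Ω ⊆ ℝ^d be a nonempty bounded open set, let β ∈ (0,1], and let u : closure(Ω) → ℝ be continuous and satisfy comparison with β-cones on Ω. Then for every ε > 0, every x ∈ Ω_{2ε} and every y ∈ B(x;2ε) one has u(y) ≤ u(x) + (u^{2ε}(x) − u(x)) · |y − x|^β / (2ε)^β. -/
open Metric Real Set Filter

noncomputable section

/-- The inner parallel set `Ω_ε = {x ∈ Ω : dist(x, ∂Ω) > ε}`. -/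
def innerSet {d : ℕ} (Ω : Set (EuclideanSpace ℝ (Fin d))) (ε : ℝ) :
    Set (EuclideanSpace ℝ (Fin d)) :=
  {x ∈ Ω | ε < Metric.infDist x (frontier Ω)}

/-- Upper envelope `u^ε(x) = sup_{y ∈ B(x;ε)} u(y)`. -/
def upperEnv {d : ℕ} (u : EuclideanSpace ℝ (Fin d) → ℝ) (ε : ℝ)
    (x : EuclideanSpace ℝ (Fin d)) : ℝ :=
  sSup (u '' Metric.closedBall x ε)

/-- Lower envelope `u_ε(x) = inf_{y ∈ B(x;ε)} u(y)`. -/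
def lowerEnv {d : ℕ} (u : EuclideanSpace ℝ (Fin d) → ℝ) (ε : ℝ)
    (x : EuclideanSpace ℝ (Fin d)) : ℝ :=
  sInf (u '' Metric.closedBall x ε)

/-- Finite-difference infinity-Laplacian `Δ_∞^ε u(x) = (u^ε(x) + u_ε(x) - 2u(x))/ε²`. -/
def nlInfLap {d : ℕ} (u : EuclideanSpace ℝ (Fin d) → ℝ) (ε : ℝ)
    (x : EuclideanSpace ℝ (Fin d)) : ℝ :=
  (upperEnv u ε x + lowerEnv u ε x - 2 * u x) / ε ^ 2

/-- Lower ε-slope `S_-^ε u(x) = (u(x) - u_ε(x))/ε`. -/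
def lowerSlope {d : ℕ} (u : EuclideanSpace ℝ (Fin d) → ℝ) (ε : ℝ)
    (x : EuclideanSpace ℝ (Fin d)) : ℝ :=
  (u x - lowerEnv u ε x) / ε

/-- Supremum norm of `u` over the set `S`. -/
def supNorm {d : ℕ} (S : Set (EuclideanSpace ℝ (Fin d)))
    (u : EuclideanSpace ℝ (Fin d) → ℝ) : ℝ :=
  sSup ((fun x => |u x|) '' S)

/-- `u` satisfies comparison with `β`-cones on `Ω`. -/
def ComparisonWithCones {d : ℕ} (Ω : Set (EuclideanSpace ℝ (Fin d))) (β : ℝ)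
    (u : EuclideanSpace ℝ (Fin d) → ℝ) : Prop :=
  ∀ D : Set (EuclideanSpace ℝ (Fin d)), IsOpen D → closure D ⊆ Ω →
    ∀ a : ℝ, 0 ≤ a → ∀ x₀ : EuclideanSpace ℝ (Fin d), x₀ ∉ D → ∀ x ∈ D,
      sInf ((fun ξ => u ξ - a * ‖ξ - x₀‖ ^ β) '' frontier D) ≤ u x - a * ‖x - x₀‖ ^ β ∧
      u x - a * ‖x - x₀‖ ^ β ≤ sSup ((fun ξ => u ξ - a * ‖ξ - x₀‖ ^ β) '' frontier D)

/-!
Remove the centre `x` from the ball `B(x; r)`: the boundary of what remains lies in the sphere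
together with `x`. The cone with vertex `x`, value `u(x)` there and slope
`(u^r(x) - u(x)) / r^β` dominates `u` at `x` trivially, and on the sphere because its value there
is `u^r(x)`. Comparison from above carries this bound into the punctured ball.
-/

theorem subset_of_isPreconnected_of_disjoint_frontier {X : Type*} [TopologicalSpace X]
    {s t : Set X} (ht : IsPreconnected t) (hts : (t ∩ s).Nonempty)
    (hd : Disjoint t (frontier s)) : t ⊆ s := by
  have hcover : t ⊆ interior s ∪ interior sᶜ := by
    rw [← compl_frontier_eq_union_interior]
    exact hd.subset_compl_right
  have hdisj : Disjoint (interior s) (interior sᶜ) :=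
    disjoint_compl_right.mono interior_subset interior_subset
  obtain ⟨x, hxt, hxs⟩ := hts
  have hx : x ∈ interior s :=
    (hcover hxt).resolve_right fun hxc => interior_subset hxc hxs
  exact (ht.subset_left_of_subset_union isOpen_interior isOpen_interior hdisj hcover
    ⟨x, hxt, hx⟩).trans interior_subset

theorem closedBall_subset_of_lt_infDist_frontier {E : Type*} [SeminormedAddCommGroup E]
    [NormedSpace ℝ E] {s : Set E} {x : E} {r : ℝ} (hx : x ∈ s)
    (hr : r < infDist x (frontier s)) : closedBall x r ⊆ s := by
  rcases lt_or_ge r 0 with hr₀ | hr₀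
  · simp only [closedBall_eq_empty.2 hr₀, empty_subset]
  · exact subset_of_isPreconnected_of_disjoint_frontier (convex_closedBall x r).isPreconnected
      ⟨x, mem_closedBall_self hr₀, hx⟩ (disjoint_closedBall_of_lt_infDist hr)

theorem frontier_ball_diff_center_subset {X : Type*} [MetricSpace X] (x : X) (r : ℝ) :
    frontier (ball x r \ {x}) ⊆ insert x (sphere x r) := by
  intro ξ hξ
  rw [sdiff_eq] at hξ
  rcases frontier_inter_subset _ _ hξ with hball | hcenter
  · exact Or.inr (frontier_ball_subset_sphere hball.1)
  · rw [frontier_compl] at hcenter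
    exact Or.inl (isClosed_singleton.frontier_subset hcenter.2)

/-- Comparison with `β`-cones from above on `Ω`, the half of `ComparisonWithCones` that bounds `u`
from above, in a metric space. The maximum over `∂D` is encoded by an arbitrary upper bound `c`, so
that the junk value of `sSup` on an empty or unbounded set plays no role. -/
def ComparisonWithConesFromAbove {X : Type*} [MetricSpace X] (Ω : Set X) (β : ℝ) (u : X → ℝ) :
    Prop :=
  ∀ D : Set X, IsOpen D → closure D ⊆ Ω → ∀ a : ℝ, 0 ≤ a → ∀ x₀ ∉ D, ∀ c : ℝ,
    (∀ ξ ∈ frontier D, u ξ ≤ c + a * dist ξ x₀ ^ β) → ∀ y ∈ D, u y ≤ c + a * dist y x₀ ^ β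

theorem ComparisonWithCones.fromAbove {d : ℕ} {Ω : Set (EuclideanSpace ℝ (Fin d))} {β : ℝ}
    {u : EuclideanSpace ℝ (Fin d) → ℝ} (hu : ComparisonWithCones Ω β u) :
    ComparisonWithConesFromAbove Ω β u := by
  intro D hDo hDΩ a ha x₀ hx₀ c hc y hy
  have hne : (frontier D).Nonempty :=
    nonempty_frontier_iff.2 ⟨⟨y, hy⟩, (ne_univ_iff_exists_notMem D).2 ⟨x₀, hx₀⟩⟩
  simp only [dist_eq_norm, ← sub_le_iff_le_add] at hc ⊢
  exact (hu D hDo hDΩ a ha x₀ hx₀ y hy).2.trans (csSup_le (hne.image _) (forall_mem_image.2 hc))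

theorem ComparisonWithConesFromAbove.le_cone_of_forall_sphere_le {X : Type*} [MetricSpace X]
    {Ω : Set X} {β : ℝ} {u : X → ℝ} (hu : ComparisonWithConesFromAbove Ω β u) (hβ : 0 < β)
    {x : X} {r : ℝ} (hball : closedBall x r ⊆ Ω) {a : ℝ} (ha : 0 ≤ a)
    (hsphere : ∀ ξ ∈ sphere x r, u ξ ≤ u x + a * r ^ β) {y : X} (hy : y ∈ closedBall x r) :
    u y ≤ u x + a * dist y x ^ β := by
  have hboundary : ∀ ξ ∈ insert x (sphere x r), u ξ ≤ u x + a * dist ξ x ^ β := by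
    rintro ξ (rfl | hξ)
    · rw [dist_self, zero_rpow hβ.ne', mul_zero, add_zero]
    · exact (mem_sphere.1 hξ).symm ▸ hsphere ξ hξ
  by_cases hyD : y ∈ ball x r \ {x}
  · have hclosure : closure (ball x r \ {x}) ⊆ Ω :=
      (closure_mono sdiff_subset).trans (closure_ball_subset_closedBall.trans hball)
    exact hu _ (isOpen_ball.sdiff isClosed_singleton) hclosure a ha x (fun hx => hx.2 rfl) (u x)
      (fun ξ hξ => hboundary ξ (frontier_ball_diff_center_subset x r hξ)) y hyD
  · rw [← ball_union_sphere] at hy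
    exact hboundary y (hy.elim (fun h => Or.inl (not_not.1 fun hyx => hyD ⟨h, hyx⟩)) Or.inr)

theorem stmt0_general {X : Type*} [MetricSpace X] {Ω : Set X} {β : ℝ} (hβ : 0 < β) {u : X → ℝ}
    (hu : ComparisonWithConesFromAbove Ω β u) {r : ℝ} (hr : 0 < r) {x : X}
    (hball : closedBall x r ⊆ Ω) (hbdd : BddAbove (u '' closedBall x r)) {y : X}
    (hy : y ∈ closedBall x r) :
    u y ≤ u x + (sSup (u '' closedBall x r) - u x) * dist y x ^ β / r ^ β := by
  have hrβ : 0 < r ^ β := rpow_pos_of_pos hr β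
  have hle : ∀ z ∈ closedBall x r, u z ≤ sSup (u '' closedBall x r) := fun z hz =>
    le_csSup hbdd (mem_image_of_mem u hz)
  have hslope : 0 ≤ (sSup (u '' closedBall x r) - u x) / r ^ β :=
    div_nonneg (sub_nonneg.2 (hle x (mem_closedBall_self hr.le))) hrβ.le
  rw [mul_div_right_comm]
  refine hu.le_cone_of_forall_sphere_le hβ hball hslope (fun ξ hξ => ?_) hy
  rw [div_mul_cancel₀ _ hrβ.ne', add_sub_cancel]
  exact hle ξ (sphere_subset_closedBall hξ)

/-- comparison with Hölder cones gives the pointwise estimate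
`u(y) ≤ u(x) + (u^{2ε}(x) − u(x)) · |y − x|^β / (2ε)^β` on balls. -/
theorem stmt0 {d : ℕ} (hd : 1 ≤ d) (Ω : Set (EuclideanSpace ℝ (Fin d)))
    (hΩne : Ω.Nonempty) (hΩb : Bornology.IsBounded Ω) (hΩo : IsOpen Ω)
    (β : ℝ) (hβ : β ∈ Set.Ioc (0 : ℝ) 1)
    (u : EuclideanSpace ℝ (Fin d) → ℝ) (hu : ContinuousOn u (closure Ω))
    (hcomp : ComparisonWithCones Ω β u)
    (ε : ℝ) (hε : 0 < ε)
    (x : EuclideanSpace ℝ (Fin d)) (hx : x ∈ innerSet Ω (2 * ε))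
    (y : EuclideanSpace ℝ (Fin d)) (hy : y ∈ Metric.closedBall x (2 * ε)) :
    u y ≤ u x + (upperEnv u (2 * ε) x - u x) * ‖y - x‖ ^ β / (2 * ε) ^ β := by
  have hball : closedBall x (2 * ε) ⊆ Ω := closedBall_subset_of_lt_infDist_frontier hx.1 hx.2
  have hbdd : BddAbove (u '' closedBall x (2 * ε)) :=
    (isCompact_closedBall x _).bddAbove_image (hu.mono (hball.trans subset_closure))
  simpa only [upperEnv, dist_eq_norm] using
    stmt0_general hβ.1 hcomp.fromAbove (by positivity) hball hbdd hy
end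
end

section
/- (Lemma 3.4, perturbation to a strict supersolution.) Let d ≥ 1, let Ω ⊆ ℝ^d be a bounded open set, let ε > 0 with Ω_ε nonempty, and let v : closure(Ω_ε) → ℝ be continuous with −Δ_∞^ε v(x) ≥ 0 for all x ∈ Ω_{2ε}. Then for every δ ≥ 0 with 4δ‖v‖_∞ ≤ 1 there exists a function w : closure(Ω_ε) → ℝ such that −Δ_∞^ε w(x) ≥ −Δ_∞^ε v(x) + δ (S_-^ε v(x))² for all x ∈ Ω_{2ε}, and ‖v − w‖_∞ ≤ 3 ‖v‖_∞² δ. -/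
open Metric Real Set Filter

noncomputable section

/-!
Take `w = φ ∘ v`, where `φ t = t + δ (M² - (M - t)²)` is a concave quadratic that increases up to
`M = ‖v‖_∞`. Being increasing on the range of `v`, it commutes with both envelopes, and expanding
the quadratic gives the exact identity
`-Δ_∞^ε w = (1 + 2δ(M - v)) (-Δ_∞^ε v) + δ ((S_+^ε v)² + (S_-^ε v)²)`,
in which the coefficient of `-Δ_∞^ε v ≥ 0` is at least `1`. The distance to `v` is controlled by
`|t - φ t| = δ |t| |t - 2M| ≤ 3M²δ` for `|t| ≤ M`.
-/

variable {d : ℕ} {Ω S : Set (EuclideanSpace ℝ (Fin d))} {u : EuclideanSpace ℝ (Fin d) → ℝ}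
  {x : EuclideanSpace ℝ (Fin d)} {ε M δ : ℝ}

theorem abs_le_supNorm (hu : BddAbove ((fun y => |u y|) '' S)) (hx : x ∈ S) : |u x| ≤ supNorm S u :=
  le_csSup hu (mem_image_of_mem _ hx)

theorem supNorm_le (hM : 0 ≤ M) (hu : ∀ y ∈ S, |u y| ≤ M) : supNorm S u ≤ M :=
  Real.sSup_le (forall_mem_image.2 hu) hM

theorem subset_interior_of_disjoint_frontier {X : Type*} [TopologicalSpace X] {s t : Set X}
    (hs : IsPreconnected s) (hst : (s ∩ t).Nonempty) (hd : Disjoint s (frontier t)) :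
    s ⊆ interior t := by
  have hclosure : ∀ y ∈ s, y ∈ closure t → y ∈ interior t := fun y hys hyt =>
    of_not_not fun hyi => disjoint_left.1 hd hys ⟨hyt, hyi⟩
  obtain ⟨z, hzs, hzt⟩ := hst
  exact hs.subset_of_closure_inter_subset isOpen_interior
    ⟨z, hzs, hclosure z hzs (subset_closure hzt)⟩
    fun y hy => hclosure y hy.2 (closure_mono interior_subset hy.1)

theorem closedBall_subset_innerSet {r s : ℝ} (hr : 0 ≤ r) (hs : 0 ≤ s)
    (hx : x ∈ innerSet Ω (r + s)) : closedBall x r ⊆ innerSet Ω s := by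
  obtain ⟨hxΩ, hxd⟩ := hx
  have hdisj : Disjoint (closedBall x r) (frontier Ω) :=
    disjoint_closedBall_of_lt_infDist (by linarith)
  have hsub : closedBall x r ⊆ interior Ω :=
    subset_interior_of_disjoint_frontier (convex_closedBall x r).isPreconnected
      ⟨x, mem_closedBall_self hr, hxΩ⟩ hdisj
  intro y hy
  have hxy : infDist x (frontier Ω) ≤ infDist y (frontier Ω) + dist x y :=
    infDist_le_infDist_add_dist
  exact ⟨interior_subset (hsub hy), by linarith [mem_closedBall'.1 hy]⟩

theorem upperEnv_comp {f : ℝ → ℝ} (hε : 0 ≤ ε)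
    (hfc : ContinuousWithinAt f (u '' closedBall x ε) (upperEnv u ε x))
    (hfm : MonotoneOn f (u '' closedBall x ε)) (hu : BddAbove (u '' closedBall x ε)) :
    upperEnv (f ∘ u) ε x = f (upperEnv u ε x) := by
  rw [upperEnv, image_comp]
  exact (hfm.map_csSup_of_continuousWithinAt hfc ((nonempty_closedBall.2 hε).image u) hu).symm

theorem lowerEnv_comp {f : ℝ → ℝ} (hε : 0 ≤ ε)
    (hfc : ContinuousWithinAt f (u '' closedBall x ε) (lowerEnv u ε x))
    (hfm : MonotoneOn f (u '' closedBall x ε)) (hu : BddBelow (u '' closedBall x ε)) :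
    lowerEnv (f ∘ u) ε x = f (lowerEnv u ε x) := by
  rw [lowerEnv, image_comp]
  exact (hfm.map_csInf_of_continuousWithinAt hfc ((nonempty_closedBall.2 hε).image u) hu).symm

/-- Upper ε-slope `S_+^ε u(x) = (u^ε(x) - u(x))/ε`. -/
def upperSlope (u : EuclideanSpace ℝ (Fin d) → ℝ) (ε : ℝ) (x : EuclideanSpace ℝ (Fin d)) : ℝ :=
  (upperEnv u ε x - u x) / ε

/-- The concave quadratic perturbation of the identity by which a supersolution bounded by `M` is
composed to make it strict; it is normalized to fix `0` and to have slope `1` at `M`. -/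
def quadPerturb (M δ t : ℝ) : ℝ :=
  t + δ * (M ^ 2 - (M - t) ^ 2)

theorem continuous_quadPerturb : Continuous (quadPerturb M δ) := by
  unfold quadPerturb
  fun_prop

theorem monotoneOn_quadPerturb (hδ : 0 ≤ δ) : MonotoneOn (quadPerturb M δ) (Iic M) := by
  intro s _ t (ht : t ≤ M) hst
  have hsq : (M - t) ^ 2 ≤ (M - s) ^ 2 :=
    pow_le_pow_left₀ (sub_nonneg.2 ht) (sub_le_sub_left hst M) 2
  unfold quadPerturb
  gcongr

theorem abs_sub_quadPerturb_le {t : ℝ} (hδ : 0 ≤ δ) (ht : |t| ≤ M) :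
    |t - quadPerturb M δ t| ≤ 3 * M ^ 2 * δ := by
  have h_factor : |t - 2 * M| ≤ 3 * M := by
    rw [abs_le] at ht ⊢
    constructor <;> linarith
  calc |t - quadPerturb M δ t| = |δ * (t * (t - 2 * M))| := by
        unfold quadPerturb
        ring_nf
    _ = δ * (|t| * |t - 2 * M|) := by rw [abs_mul, abs_mul, abs_of_nonneg hδ]
    _ ≤ δ * (M * (3 * M)) := by
        have hM : 0 ≤ M := (abs_nonneg t).trans ht
        gcongr
    _ = 3 * M ^ 2 * δ := by ring

theorem neg_nlInfLap_quadPerturb_comp (hε : 0 ≤ ε) (hδ : 0 ≤ δ)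
    (huM : ∀ y ∈ closedBall x ε, u y ≤ M) (hu : BddBelow (u '' closedBall x ε)) :
    -(nlInfLap (quadPerturb M δ ∘ u) ε x) =
      (1 + 2 * δ * (M - u x)) * -(nlInfLap u ε x) +
        δ * (upperSlope u ε x ^ 2 + lowerSlope u ε x ^ 2) := by
  have hrange : u '' closedBall x ε ⊆ Iic M := image_subset_iff.2 huM
  have hmono : MonotoneOn (quadPerturb M δ) (u '' closedBall x ε) :=
    (monotoneOn_quadPerturb hδ).mono hrange
  have hupper := upperEnv_comp hε continuous_quadPerturb.continuousWithinAt hmono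
    (bddAbove_Iic.mono hrange)
  have hlower := lowerEnv_comp hε continuous_quadPerturb.continuousWithinAt hmono hu
  simp only [nlInfLap, upperSlope, lowerSlope, hupper, hlower, quadPerturb, Function.comp_apply]
  ring

theorem le_neg_nlInfLap_quadPerturb_comp (hε : 0 ≤ ε) (hδ : 0 ≤ δ)
    (huM : ∀ y ∈ closedBall x ε, u y ≤ M) (hu : BddBelow (u '' closedBall x ε))
    (hsup : 0 ≤ -(nlInfLap u ε x)) :
    -(nlInfLap u ε x) + δ * lowerSlope u ε x ^ 2 ≤ -(nlInfLap (quadPerturb M δ ∘ u) ε x) := by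
  have hcoeff : 1 ≤ 1 + 2 * δ * (M - u x) :=
    le_add_of_nonneg_right
      (mul_nonneg (by positivity) (sub_nonneg.2 (huM x (mem_closedBall_self hε))))
  rw [neg_nlInfLap_quadPerturb_comp hε hδ huM hu]
  gcongr
  · exact le_mul_of_one_le_left hsup hcoeff
  · exact le_add_of_nonneg_left (sq_nonneg _)

theorem stmt7_general {v : EuclideanSpace ℝ (Fin d) → ℝ} (hε : 0 < ε)
    (hv : BddAbove ((fun x => |v x|) '' closure (innerSet Ω ε)))
    (hsup : ∀ x ∈ innerSet Ω (2 * ε), 0 ≤ -(nlInfLap v ε x)) (hδ : 0 ≤ δ) :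
    ∃ w : EuclideanSpace ℝ (Fin d) → ℝ,
      (∀ x ∈ innerSet Ω (2 * ε),
        -(nlInfLap v ε x) + δ * (lowerSlope v ε x) ^ 2 ≤ -(nlInfLap w ε x)) ∧
      supNorm (closure (innerSet Ω ε)) (fun x => v x - w x) ≤
        3 * (supNorm (closure (innerSet Ω ε)) v) ^ 2 * δ := by
  set S := closure (innerSet Ω ε)
  set M := supNorm S v
  have hvM : ∀ y ∈ S, |v y| ≤ M := fun y hy => abs_le_supNorm hv hy
  refine ⟨quadPerturb M δ ∘ v, fun x hx => ?_,
    supNorm_le (by positivity) fun y hy => abs_sub_quadPerturb_le hδ (hvM y hy)⟩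
  have hball : ∀ y ∈ closedBall x ε, |v y| ≤ M := fun y hy =>
    hvM y (subset_closure (closedBall_subset_innerSet hε.le hε.le (two_mul ε ▸ hx) hy))
  exact le_neg_nlInfLap_quadPerturb_comp hε.le hδ (fun y hy => (abs_le.1 (hball y hy)).2)
    ⟨-M, forall_mem_image.2 fun y hy => (abs_le.1 (hball y hy)).1⟩ (hsup x hx)

/-- Lemma 3.4: perturbation to a strict supersolution. -/
theorem stmt7 {d : ℕ} (hd : 1 ≤ d) (Ω : Set (EuclideanSpace ℝ (Fin d)))
    (hΩb : Bornology.IsBounded Ω) (hΩo : IsOpen Ω)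
    (ε : ℝ) (hε : 0 < ε) (hne : (innerSet Ω ε).Nonempty)
    (v : EuclideanSpace ℝ (Fin d) → ℝ)
    (hv : ContinuousOn v (closure (innerSet Ω ε)))
    (hsup : ∀ x ∈ innerSet Ω (2 * ε), 0 ≤ -(nlInfLap v ε x))
    (δ : ℝ) (hδ : 0 ≤ δ)
    (hδ2 : 4 * δ * supNorm (closure (innerSet Ω ε)) v ≤ 1) :
    ∃ w : EuclideanSpace ℝ (Fin d) → ℝ,
      (∀ x ∈ innerSet Ω (2 * ε),
        -(nlInfLap v ε x) + δ * (lowerSlope v ε x) ^ 2 ≤ -(nlInfLap w ε x)) ∧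
      supNorm (closure (innerSet Ω ε)) (fun x => v x - w x) ≤
        3 * (supNorm (closure (innerSet Ω ε)) v) ^ 2 * δ := by
  have hS : IsCompact (closure (innerSet Ω ε)) :=
    (hΩb.subset fun _ hx => hx.1).isCompact_closure
  exact stmt7_general hε (hS.bddAbove_image hv.abs) hsup hδ
end
end
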